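/- (Worst-case efficiency example) Fix n ≥ 2 and consider the normalized game with n machines and m = n² + n users: n² 'uniform' users each with weight 1/n on every machine, and n 'focused' users, the k-th of which has weight 1 on machine k and weight 0 on all other machines; all budgets are 1. Then the bid profile in which every uniform user bids 1/n on every machine and the k-th focused user bids 1 on machine k is a Nash equilibrium; the total bid on every machine is n + 1, the social welfare at this equilibrium equals 2n/(n+1) < 2, the social optimum equals n, and hence the efficiency equals 2/(n+1). -/

import Mathlib

open Finset

/-- User `i`'s utility at the bid profile `x` (division by zero is zero, matching the
convention that a machine with no bids is allocated to nobody). -/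
noncomputable def util {I J : Type*} [Fintype I] [Fintype J]
    (w x : I → J → ℝ) (i : I) : ℝ :=
  ∑ j, w i j * (x i j / ∑ k, x k j)

/-- Nash equilibrium: a feasible profile (nonnegative bids, each user spending exactly
his budget) where no user can strictly increase his utility by unilaterally replacing
his own bid vector with another feasible one. -/
def IsNash {I J : Type*} [Fintype I] [Fintype J] [DecidableEq I]
    (X : I → ℝ) (w x : I → J → ℝ) : Prop :=
  ((∀ i j, 0 ≤ x i j) ∧ ∀ i, ∑ j, x i j = X i) ∧
    ∀ (i : I) (xi : J → ℝ), (∀ j, 0 ≤ xi j) → ∑ j, xi j = X i →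
      util w (Function.update x i xi) i ≤ util w x i

lemma tangent_bound (t a c : ℝ) (ht : 0 ≤ t) (ha : 0 ≤ a) (hc : 0 < c) :
    t / (t + c) ≤ a / (a + c) + c / (a + c) ^ 2 * (t - a) := by
  have h1 : 0 < t + c := by linarith
  have h2 : 0 < a + c := by linarith
  have : a / (a + c) + c / (a + c) ^ 2 * (t - a) - t / (t + c)
      = c * (t - a) ^ 2 / ((a + c) ^ 2 * (t + c)) := by
    field_simp
    ring
  have h3 : 0 ≤ c * (t - a) ^ 2 / ((a + c) ^ 2 * (t + c)) := by positivity
  linarith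

lemma sum_update_bid {I J : Type*} [Fintype I] [DecidableEq I]
    (x : I → J → ℝ) (i : I) (xi : J → ℝ) (j : J) :
    ∑ k, Function.update x i xi k j = xi j + (∑ k, x k j - x i j) := by
  rw [← Finset.add_sum_erase _ _ (Finset.mem_univ i),
    ← Finset.add_sum_erase _ (fun k => x k j) (Finset.mem_univ i)]
  have : ∑ k ∈ univ.erase i, Function.update x i xi k j = ∑ k ∈ univ.erase i, x k j := by
    apply Finset.sum_congr rfl
    intro k hk
    rw [Function.update_of_ne (Finset.ne_of_mem_erase hk)]
  rw [this]
  simp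

/-- Worst-case efficiency example: for `n ≥ 2`, in the normalized game
with `n` machines and `m = n² + n` users — `n²` uniform users with weight `1/n` on every
machine and `n` focused users, the `k`-th having weight `1` on machine `k` and `0`
elsewhere — the profile where every uniform user bids `1/n` on every machine and the
`k`-th focused user bids `1` on machine `k` is a Nash equilibrium; the total bid on
every machine is `n + 1`, the social welfare equals `2n/(n+1) < 2`, the social optimum
equals `n`, and hence the efficiency equals `2/(n+1)`. -/
theorem worstCase_efficiency_example (n : ℕ) (hn : 2 ≤ n) :
    let w : Fin (n ^ 2) ⊕ Fin n → Fin n → ℝ :=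
      Sum.elim (fun _ _ => 1 / (n : ℝ)) (fun k j => if j = k then 1 else 0)
    let x : Fin (n ^ 2) ⊕ Fin n → Fin n → ℝ :=
      Sum.elim (fun _ _ => 1 / (n : ℝ)) (fun k j => if j = k then 1 else 0)
    IsNash (fun _ => 1) w x ∧
    (∀ j, ∑ i, x i j = (n : ℝ) + 1) ∧
    (∑ i, util w x i = 2 * (n : ℝ) / ((n : ℝ) + 1)) ∧
    (2 * (n : ℝ) / ((n : ℝ) + 1) < 2) ∧
    (∑ j, Finset.univ.sup' ⟨Sum.inr j, Finset.mem_univ _⟩ (fun i => w i j) = (n : ℝ)) ∧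
    ((∑ i, util w x i) /
        (∑ j, Finset.univ.sup' ⟨Sum.inr j, Finset.mem_univ _⟩ (fun i => w i j))
      = 2 / ((n : ℝ) + 1)) := by
  intro w x
  have hn2 : (2 : ℝ) ≤ n := by exact_mod_cast hn
  have hn0 : (0 : ℝ) < n := by linarith
  have hinv : 1 / (n : ℝ) ≤ 1 := by
    rw [div_le_one hn0]
    linarith
  have hinv0 : 0 < 1 / (n : ℝ) := by positivity
  have hY : ∀ j, ∑ i, x i j = (n : ℝ) + 1 := by
    intro j
    simp only [x, Fintype.sum_sum_type, Sum.elim_inl, Sum.elim_inr]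
    simp
    field_simp
  have hUl : ∀ a, util w x (Sum.inl a) = 1 / ((n : ℝ) * (n + 1)) := by
    intro a
    simp only [util, hY]
    simp [w, x]
    field_simp
  have hUr : ∀ a, util w x (Sum.inr a) = 1 / ((n : ℝ) + 1) := by
    intro a
    simp only [util, hY]
    simp [w, x]
  have hW : ∑ i, util w x i = 2 * (n : ℝ) / ((n : ℝ) + 1) := by
    rw [Fintype.sum_sum_type]
    simp only [hUl, hUr]
    simp
    field_simp
    norm_num
  have hS : ∑ j, Finset.univ.sup' ⟨Sum.inr j, Finset.mem_univ _⟩ (fun i => w i j) = (n : ℝ) := by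
    have h1 : ∀ j, Finset.univ.sup' ⟨Sum.inr j, Finset.mem_univ _⟩ (fun i => w i j) = (1 : ℝ) := by
      intro j
      apply le_antisymm
      · apply Finset.sup'_le
        rintro (a | a) -
        · exact hinv
        · simp only [w, Sum.elim_inr]
          split_ifs <;> norm_num
      · have := Finset.le_sup' (fun i => w i j) (Finset.mem_univ (Sum.inr j))
        simpa [w] using this
    simp only [h1]
    simp
  refine ⟨⟨⟨?_, ?_⟩, ?_⟩, hY, hW, ?_, hS, ?_⟩
  · rintro (a | a) j
    · exact hinv0.le
    · simp only [x, Sum.elim_inr]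
      split_ifs <;> norm_num
  · rintro (a | a)
    · simp [x]
      field_simp
    · simp [x]
  · rintro (a | a) xi hxi hsum
    · rw [hUl]
      simp only [util, sum_update_bid, hY, Function.update_self]
      have hc : 0 < (n : ℝ) + 1 - 1 / n := by linarith
      calc ∑ j, w (Sum.inl a) j * (xi j / (xi j + ((n : ℝ) + 1 - x (Sum.inl a) j)))
          ≤ ∑ j, 1 / (n : ℝ) * ((1 / n) / (1 / n + (n + 1 - 1 / n))
              + (n + 1 - 1 / n) / (1 / n + (n + 1 - 1 / n)) ^ 2 * (xi j - 1 / n)) := by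
            apply Finset.sum_le_sum
            intro j _
            exact mul_le_mul_of_nonneg_left
              (tangent_bound (xi j) (1 / n) _ (hxi j) hinv0.le hc) hinv0.le
        _ = 1 / ((n : ℝ) * (n + 1)) := by
            rw [← Finset.mul_sum, Finset.sum_add_distrib, ← Finset.mul_sum,
              Finset.sum_sub_distrib, hsum]
            have h1 : ∑ _j : Fin n, 1 / (n : ℝ) = 1 := by
              simp
              field_simp
            rw [h1, show 1 / (n : ℝ) + (n + 1 - 1 / n) = n + 1 by ring]
            simp
            field_simp
    · rw [hUr]
      simp only [util, sum_update_bid, hY, Function.update_self]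
      have h1 : xi a ≤ 1 := by
        refine le_of_le_of_eq ?_ hsum
        exact Finset.single_le_sum (fun j _ => hxi j) (Finset.mem_univ a)
      have h0 := hxi a
      simp only [w, x, Sum.elim_inr, ite_mul, one_mul, zero_mul, Finset.sum_ite_eq',
        Finset.mem_univ, if_true]
      rw [div_le_div_iff₀ (by linarith) (by linarith)]
      nlinarith
  · rw [div_lt_iff₀ (by linarith)]
    linarith
  · rw [hW, hS]
    field_simp
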